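/- For the newly proposed AND-operator A_ν with ν > 0 and fixed ρ₁ ≠ 0, the limit of A_ν(ρ₁,ρ₂,…,ρ_M) as all of ρ₂,…,ρ_M tend to +∞ (simultaneously, i.e., as min over j≥2 of ρ_j → ∞) equals ρ₁. -/

import Mathlib

/-!
Once every other argument is at least `r₁`, the minimum of the arguments is exactly `r₁`. From then
on, numerator and denominator of `A_ν` are sums `∑ i, f (ρ i)` of a function `f` of one real variable
which depends only on `ν` and `r₁` and which vanishes at `+∞`: a decaying exponential or, in the
numerator for `r₁ > 0`, a linear function times one. By `tendsto_sum_update` each sum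
tends to its term `f r₁`, and the ratio of these two terms is `r₁`, since both exponentials equal
`1` at `r₁`.
-/

open Finset

/-- The minimum of the components of `ρ`. -/
noncomputable def rmin {M : ℕ} (hM : 0 < M) (ρ : Fin M → ℝ) : ℝ :=
  Finset.univ.inf' (by rwa [Finset.univ_nonempty_iff, ← Fin.pos_iff_nonempty]) ρ

/-- The maximum of the components of `ρ`. -/
noncomputable def rmax {M : ℕ} (hM : 0 < M) (ρ : Fin M → ℝ) : ℝ :=
  Finset.univ.sup' (by rwa [Finset.univ_nonempty_iff, ← Fin.pos_iff_nonempty]) ρ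

/-- The newly proposed AND-operator `A_ν`. -/
noncomputable def Anu (ν : ℝ) {M : ℕ} (hM : 0 < M) (ρ : Fin M → ℝ) : ℝ :=
  if rmin hM ρ < 0 then
    (∑ i, rmin hM ρ * Real.exp ((1 + ν) * ((ρ i - rmin hM ρ) / rmin hM ρ))) /
      (∑ i, Real.exp (ν * ((ρ i - rmin hM ρ) / rmin hM ρ)))
  else if 0 < rmin hM ρ then
    (∑ i, ρ i * Real.exp (-ν * ((ρ i - rmin hM ρ) / rmin hM ρ))) /
      (∑ i, Real.exp (-ν * ((ρ i - rmin hM ρ) / rmin hM ρ)))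
  else 0

/-- If `f` vanishes at `+∞`, only the frozen coordinate contributes to the limit of
`∑ i, f (ρ i)`. -/
lemma tendsto_sum_update {M : ℕ} (i₀ : Fin M) (r₁ : ℝ) (f : ℝ → ℝ)
    (hf : Filter.Tendsto f Filter.atTop (nhds 0)) :
    Filter.Tendsto (fun v : Fin M → ℝ => ∑ i, f (Function.update v i₀ r₁ i))
      Filter.atTop (nhds (f r₁)) := by
  have h : Filter.Tendsto (fun v : Fin M → ℝ => ∑ i, f (Function.update v i₀ r₁ i))
      Filter.atTop (nhds (∑ i, if i = i₀ then f r₁ else 0)) := by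
    refine tendsto_finsetSum _ fun i _ => ?_
    by_cases hi : i = i₀
    · subst hi
      simp
    · simp only [Function.update_of_ne hi, if_neg hi]
      refine hf.comp (Filter.tendsto_atTop.2 fun b => ?_)
      filter_upwards [Filter.eventually_ge_atTop (fun _ : Fin M => b)] with v hv using hv i
  simpa using h

lemma rmin_update_eventually {M : ℕ} (hM : 0 < M) (i₀ : Fin M) (r₁ : ℝ) :
    ∀ᶠ v : Fin M → ℝ in Filter.atTop, rmin hM (Function.update v i₀ r₁) = r₁ := by
  filter_upwards [Filter.eventually_ge_atTop (fun _ : Fin M => r₁)] with v hv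
  apply le_antisymm
  · have h := Finset.inf'_le (Function.update v i₀ r₁) (Finset.mem_univ i₀)
    rwa [Function.update_self] at h
  · refine Finset.le_inf' _ _ fun i _ => ?_
    by_cases hi : i = i₀
    · subst hi
      simp
    · rw [Function.update_of_ne hi]
      exact hv i

lemma tendsto_exp_neg_slope {c r : ℝ} (h : c / r < 0) :
    Filter.Tendsto (fun x : ℝ => Real.exp (c * ((x - r) / r))) Filter.atTop (nhds 0) := by
  refine Real.tendsto_exp_atBot.comp ?_
  have h1 : Filter.Tendsto (fun x : ℝ => x - r) Filter.atTop Filter.atTop :=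
    Filter.tendsto_atTop_add_const_right _ (-r) Filter.tendsto_id
  exact (h1.const_mul_atTop_of_neg h).congr fun x => by ring

lemma tendsto_mul_exp_neg_slope {c r : ℝ} (h : c / r < 0) :
    Filter.Tendsto (fun x : ℝ => x * Real.exp (c * ((x - r) / r))) Filter.atTop (nhds 0) := by
  have hr : r ≠ 0 := by
    rintro rfl
    simp at h
  have h1 := Real.tendsto_pow_mul_exp_neg_atTop_nhds_zero 1
  have h2 : Filter.Tendsto (fun x : ℝ => -(c / r) * x) Filter.atTop Filter.atTop :=
    Filter.tendsto_id.const_mul_atTop (neg_pos.2 h)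
  -- Substituting `y = -(c / r) * x` in `y * exp (-y)` leaves the constant factor below.
  have h3 := (h1.comp h2).const_mul ((-(c / r))⁻¹ * Real.exp (-c))
  rw [mul_zero] at h3
  refine h3.congr fun x => ?_
  have e : c * ((x - r) / r) = -c + -(-(c / r) * x) := by
    field_simp
    ring
  have hne : -(c / r) ≠ 0 := (neg_pos.2 h).ne'
  rw [e, Real.exp_add]
  simp only [Function.comp, pow_one]
  calc _ = ((-(c / r))⁻¹ * (-(c / r))) * (x * (Real.exp (-c) * Real.exp (-(-(c / r) * x)))) := by
        ring
    _ = _ := by rw [inv_mul_cancel₀ hne, one_mul]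

/-- With one argument fixed at a nonzero value `r₁`, the new AND-operator tends to
`r₁` as all the remaining arguments tend to `+∞` simultaneously. -/
theorem Anu_limit_at_infinity (ν : ℝ) (hν : 0 < ν) (M : ℕ) (hM2 : 2 ≤ M)
    (hM : 0 < M := by omega) (i₀ : Fin M) (r₁ : ℝ) (hr₁ : r₁ ≠ 0) :
    Filter.Tendsto (fun v : Fin M → ℝ => Anu ν hM (Function.update v i₀ r₁))
      Filter.atTop (nhds r₁) := by
  have hmin := rmin_update_eventually hM i₀ r₁
  rcases lt_or_gt_of_ne hr₁ with h | h
  · have hn := tendsto_sum_update i₀ r₁ (fun x => r₁ * Real.exp ((1 + ν) * ((x - r₁) / r₁)))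
      (by simpa using
        (tendsto_exp_neg_slope (div_neg_of_pos_of_neg (by linarith : 0 < 1 + ν) h)).const_mul r₁)
    have hd := tendsto_sum_update i₀ r₁ (fun x => Real.exp (ν * ((x - r₁) / r₁)))
      (tendsto_exp_neg_slope (div_neg_of_pos_of_neg hν h))
    have hq := hn.div hd (Real.exp_ne_zero _)
    simp only [sub_self, zero_div, mul_zero, Real.exp_zero, mul_one, div_one] at hq
    refine hq.congr' ?_
    filter_upwards [hmin] with v hv
    simp only [Anu, hv, if_pos h, Pi.div_apply]
  · have hc : -ν / r₁ < 0 := div_neg_of_neg_of_pos (neg_neg_of_pos hν) h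
    have hn := tendsto_sum_update i₀ r₁ (fun x => x * Real.exp (-ν * ((x - r₁) / r₁)))
      (tendsto_mul_exp_neg_slope hc)
    have hd := tendsto_sum_update i₀ r₁ (fun x => Real.exp (-ν * ((x - r₁) / r₁)))
      (tendsto_exp_neg_slope hc)
    have hq := hn.div hd (Real.exp_ne_zero _)
    simp only [sub_self, zero_div, mul_zero, Real.exp_zero, mul_one, div_one] at hq
    refine hq.congr' ?_
    filter_upwards [hmin] with v hv
    simp only [Anu, hv, if_neg h.not_gt, if_pos h, Pi.div_apply]
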